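/- Let Y and Z be real-valued random variables on a probability space and suppose F_{Y|Z} is a conditional distribution function of Y given Z such that F_{Y|Z=z}(·) is continuous for every z. Then the random variable F_{Y|Z}(Y) is uniformly distributed on [0, 1] and independent of Z. -/

import Mathlib

open Set Filter MeasureTheory ProbabilityTheory

lemma aux_set (ν : Measure ℝ) [IsProbabilityMeasure ν] (f : ℝ → ℝ) (hm : Monotone f)
    (hc : Continuous f) (h0 : Tendsto f atBot (nhds 0)) (h1 : Tendsto f atTop (nhds 1))
    (hf : ∀ y, ν (Iic y) = ENNReal.ofReal (f y)) (x : ℝ) (hx0 : 0 ≤ x) (hx1 : x < 1) :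
    ν {y | f y ≤ x} = ENNReal.ofReal x := by
  obtain ⟨b, hb⟩ := (h1.eventually (lt_mem_nhds hx1)).exists
  have hbdd : BddAbove {y | f y ≤ x} := by
    refine ⟨b, fun y hy => ?_⟩
    by_contra h
    have := hm (not_le.mp h).le
    simp only [mem_setOf_eq] at hy
    linarith
  rcases Set.eq_empty_or_nonempty {y | f y ≤ x} with he | hne
  · rw [he]
    have : x ≤ 0 := by
      by_contra h
      obtain ⟨a, ha⟩ := (h0.eventually (gt_mem_nhds (not_le.mp h))).exists
      have : a ∈ {y | f y ≤ x} := ha.le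
      rw [he] at this
      exact this
    simp [ENNReal.ofReal_of_nonpos this]
  · have hcl : IsClosed {y | f y ≤ x} := isClosed_le hc continuous_const
    have hs := hcl.csSup_mem hne hbdd
    set s := sSup {y | f y ≤ x} with hsdef
    have hS : {y | f y ≤ x} = Iic s := by
      ext y
      exact ⟨fun hy => le_csSup hbdd hy, fun hy => (hm hy).trans hs⟩
    have hfs : f s = x := by
      refine le_antisymm hs ?_
      have hsb : s ≤ b := by
        by_contra h
        have := hm (not_le.mp h).le
        simp only [mem_setOf_eq] at hs
        linarith
      obtain ⟨t, -, ht⟩ := intermediate_value_Icc hsb hc.continuousOn ⟨hs, hb.le⟩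
      have : t ≤ s := le_csSup hbdd ht.le
      rw [← ht]
      exact hm this
    rw [hS, hf, hfs]

lemma aux_vol (x : ℝ) (hx0 : 0 ≤ x) (hx1 : x ≤ 1) :
    (volume.restrict (Icc (0:ℝ) 1)) (Iic x) = ENNReal.ofReal x := by
  rw [Measure.restrict_apply measurableSet_Iic]
  have : Iic x ∩ Icc (0:ℝ) 1 = Icc 0 x := by
    ext y; simp only [mem_inter_iff, mem_Iic, mem_Icc]
    constructor
    · rintro ⟨a, b, c⟩; exact ⟨b, a⟩
    · rintro ⟨a, b⟩; exact ⟨b, a, b.trans hx1⟩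
  rw [this, Real.volume_Icc, sub_zero]

lemma aux_map (ν : Measure ℝ) [IsProbabilityMeasure ν] (f : ℝ → ℝ) (hm : Monotone f)
    (hc : Continuous f) (h0 : Tendsto f atBot (nhds 0)) (h1 : Tendsto f atTop (nhds 1))
    (hf : ∀ y, ν (Iic y) = ENNReal.ofReal (f y)) :
    ν.map f = volume.restrict (Icc (0:ℝ) 1) := by
  have hfin := Measure.isProbabilityMeasure_map (μ := ν) hc.measurable.aemeasurable
  refine Measure.ext_of_Iic _ _ fun x => ?_
  rw [Measure.map_apply hc.measurable measurableSet_Iic]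
  have hpre : f ⁻¹' Iic x = {y | f y ≤ x} := rfl
  rw [hpre]
  have hf0 : ∀ y, 0 ≤ f y := fun y => hm.le_of_tendsto h0 y
  have hf1 : ∀ y, f y ≤ 1 := fun y => hm.ge_of_tendsto h1 y
  rcases lt_or_ge x 0 with hx | hx
  · have e1 : {y | f y ≤ x} = ∅ := by
      ext y; simp only [mem_setOf_eq, mem_empty_iff_false, iff_false, not_le]
      exact hx.trans_le (hf0 y)
    have e2 : Iic x ∩ Icc (0:ℝ) 1 = ∅ := by
      ext y; simp only [mem_inter_iff, mem_Iic, mem_Icc, mem_empty_iff_false, iff_false]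
      rintro ⟨a, b, c⟩; linarith
    rw [e1, Measure.restrict_apply measurableSet_Iic, e2]; simp
  · rcases lt_or_ge x 1 with hx1 | hx1
    · rw [aux_set ν f hm hc h0 h1 hf x hx hx1, aux_vol x hx hx1.le]
    · have e1 : {y | f y ≤ x} = univ := by
        ext y; simp only [mem_setOf_eq, mem_univ, iff_true]
        exact (hf1 y).trans hx1
      have e2 : Iic x ∩ Icc (0:ℝ) 1 = Icc 0 1 := by
        ext y; simp only [mem_inter_iff, mem_Iic, mem_Icc]
        constructor
        · rintro ⟨a, b⟩; exact b
        · rintro ⟨a, b⟩; exact ⟨b.trans hx1, a, b⟩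
      rw [e1, Measure.restrict_apply measurableSet_Iic, e2]; simp

/-- Conditional probability integral transform: if `F (Z ω) ·` is a continuous
conditional distribution function of `Y` given `Z`, then `F (Z ω) (Y ω)` is
uniformly distributed on `[0,1]` and independent of `Z`. -/
theorem stmt_10 {Ω : Type*} [MeasurableSpace Ω] (μ : Measure Ω) [IsProbabilityMeasure μ]
    (Y Z : Ω → ℝ) (hY : Measurable Y) (hZ : Measurable Z)
    (F : ℝ → ℝ → ℝ)
    (hmono : ∀ z, Monotone (F z)) (hcont : ∀ z, Continuous (F z))
    (h0 : ∀ z, Tendsto (F z) atBot (nhds 0)) (h1 : ∀ z, Tendsto (F z) atTop (nhds 1))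
    (hver : ∀ y : ℝ, (fun ω => F (Z ω) y) =ᵐ[μ]
      μ[Set.indicator {ω | Y ω ≤ y} (fun _ => (1 : ℝ)) |
        MeasurableSpace.comap Z Real.measurableSpace]) :
    (∀ x ∈ Icc (0:ℝ) 1, μ {ω | F (Z ω) (Y ω) ≤ x} = ENNReal.ofReal x) ∧
      IndepFun (fun ω => F (Z ω) (Y ω)) Z μ := by
  set κ := condDistrib Y Z μ with hκ
  have hrat : ∀ᵐ ω ∂μ, ∀ q : ℚ, F (Z ω) q = (κ (Z ω)).real (Iic (q:ℝ)) := by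
    rw [ae_all_iff]
    intro q
    have h := condDistrib_ae_eq_condExp (μ := μ) hZ hY (measurableSet_Iic (a := (q:ℝ)))
    filter_upwards [hver q, h] with ω a b
    rw [a, b]
    rfl
  have hall : ∀ᵐ ω ∂μ, ∀ y : ℝ, (κ (Z ω)).real (Iic y) = F (Z ω) y := by
    filter_upwards [hrat] with ω hω y
    refine le_antisymm ?_ ?_
    · refine le_of_forall_gt fun c hc => ?_
      obtain ⟨u, hu, hyu⟩ := (((hcont (Z ω)).tendsto y).eventually
        (gt_mem_nhds hc)).exists_gt
      obtain ⟨q, hq1, hq2⟩ := exists_rat_btwn hu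
      calc (κ (Z ω)).real (Iic y) ≤ (κ (Z ω)).real (Iic (q:ℝ)) :=
            measureReal_mono (Iic_subset_Iic.2 hq1.le)
        _ = F (Z ω) q := (hω q).symm
        _ ≤ F (Z ω) u := hmono _ hq2.le
        _ < c := hyu
    · refine le_of_forall_lt fun c hc => ?_
      obtain ⟨u, hu, hyu⟩ := (((hcont (Z ω)).tendsto y).eventually
        (lt_mem_nhds hc)).exists_lt
      obtain ⟨q, hq1, hq2⟩ := exists_rat_btwn hu
      calc c < F (Z ω) u := hyu
        _ ≤ F (Z ω) q := hmono _ hq1.le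
        _ = (κ (Z ω)).real (Iic (q:ℝ)) := hω q
        _ ≤ _ := measureReal_mono (Iic_subset_Iic.2 hq2.le)
  set G : ℝ × ℝ → ℝ := fun p => (κ p.1).real (Iic p.2) with hG
  have hGm : Measurable G := by
    have hs : MeasurableSet {p : (ℝ × ℝ) × ℝ | p.2 ≤ p.1.2} :=
      measurableSet_le measurable_snd (measurable_snd.comp measurable_fst)
    exact (Kernel.measurable_kernel_prodMk_left (κ := Kernel.prodMkRight ℝ κ) hs).ennreal_toReal
  have hGF : (fun ω => G (Z ω, Y ω)) =ᵐ[μ] fun ω => F (Z ω) (Y ω) := by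
    filter_upwards [hall] with ω hω using hω _
  have hGYm : Measurable fun ω => G (Z ω, Y ω) := hGm.comp (hZ.prodMk hY)
  have key : ∀ A B : Set ℝ, MeasurableSet A → MeasurableSet B →
      μ ((fun ω => G (Z ω, Y ω)) ⁻¹' B ∩ Z ⁻¹' A)
        = (volume.restrict (Icc (0:ℝ) 1)) B * μ (Z ⁻¹' A) := by
    intro A B hA hB
    have hS : MeasurableSet (G ⁻¹' B ∩ Prod.fst ⁻¹' A) := (hGm hB).inter (measurable_fst hA)
    have e : (fun ω => G (Z ω, Y ω)) ⁻¹' B ∩ Z ⁻¹' A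
        = (fun ω => (Z ω, Y ω)) ⁻¹' (G ⁻¹' B ∩ Prod.fst ⁻¹' A) := rfl
    rw [e, ← Measure.map_apply (hZ.prodMk hY) hS,
      ← compProd_map_condDistrib hY.aemeasurable, Measure.compProd_apply hS,
      lintegral_map (Kernel.measurable_kernel_prodMk_left hS) hZ]
    rw [← lintegral_indicator_const (hZ hA)]
    refine lintegral_congr_ae ?_
    filter_upwards [hall] with ω hω
    by_cases hz : Z ω ∈ A
    · rw [indicator_of_mem (show ω ∈ Z ⁻¹' A from hz)]
      rw [← aux_map (κ (Z ω)) (F (Z ω)) (hmono _) (hcont _) (h0 _) (h1 _)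
        (fun y => by rw [← hω y, ofReal_measureReal]),
        Measure.map_apply (hcont _).measurable hB]
      congr 1
      ext y
      simp [hG, hz, hω y]
    · rw [indicator_of_notMem (show ω ∉ Z ⁻¹' A from hz)]
      have : Prod.mk (Z ω) ⁻¹' (G ⁻¹' B ∩ Prod.fst ⁻¹' A) = ∅ := by
        ext y; simp [hz]
      rw [this]; simp
  have key1 : ∀ B : Set ℝ, MeasurableSet B →
      μ ((fun ω => G (Z ω, Y ω)) ⁻¹' B) = (volume.restrict (Icc (0:ℝ) 1)) B := by
    intro B hB
    have := key univ B MeasurableSet.univ hB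
    simpa using this
  constructor
  · intro x hx
    rw [← aux_vol x hx.1 hx.2, ← key1 _ measurableSet_Iic]
    refine measure_congr ?_
    filter_upwards [hGF] with ω hω
    apply propext
    change F (Z ω) (Y ω) ≤ x ↔ G (Z ω, Y ω) ≤ x
    rw [hω]
  · refine IndepFun.congr ?_ hGF EventuallyEq.rfl
    rw [indepFun_iff_measure_inter_preimage_eq_mul]
    intro B A hB hA
    rw [key A B hA hB, key1 B hB]
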